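/- arXiv:2601.06957 — 3 statements merged into one kernel-verified Lean document; each statement's English description precedes it below -/
import Mathlib

section
/- For every ξ = (ξ₁, ξ₂) ∈ ℝ², the characteristic polynomial of the 9×9 real matrix 𝒜(ξ) is det(λ·I₉ − 𝒜(ξ)) = λ⁵ (λ − |ξ|)² (λ + |ξ|)² = λ⁵ (λ² − |ξ|²)², where |ξ|² = ξ₁² + ξ₂². -/
/-- The principal symbol `𝒜(ξ)` of the constraint-propagation system, acting on
`ℝ⁹` with coordinates `(M₁, M₂, U₁₁, U₁₂, U₂₁, U₂₂, H, N₁, N₂)`. -/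
def constraintSymbol (ξ₁ ξ₂ : ℝ) : Matrix (Fin 9) (Fin 9) ℝ :=
  !![0, 0, -ξ₁, -ξ₂, 0, 0, ξ₁, 0, 0;
     0, 0, 0, 0, -ξ₁, -ξ₂, ξ₂, 0, 0;
     0, 0, 0, 0, 0, 0, 0, 0, 0;
     -ξ₂, ξ₁, 0, 0, 0, 0, 0, 0, 0;
     ξ₂, -ξ₁, 0, 0, 0, 0, 0, 0, 0;
     0, 0, 0, 0, 0, 0, 0, 0, 0;
     ξ₁, ξ₂, 0, 0, 0, 0, 0, 0, 0;
     0, 0, 0, 0, 0, 0, 0, 0, 0;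
     0, 0, 0, 0, 0, 0, 0, 0, 0]

/-! The symbol exchanges `M` with `(U, H, N)`, so it is block antidiagonal, and its square acts on
`M` by the product of the two off-diagonal blocks. That product is `-div curl + grad div`, the
symbol of the vector Laplacian, hence the scalar matrix `|ξ|²`, and the characteristic polynomial
of an antidiagonal block matrix is, up to a power of `X`, that of this product evaluated at `X²`. -/

section

open Matrix Polynomial

variable {R m n ι : Type*} [CommRing R] [Fintype m] [DecidableEq m] [Fintype n] [DecidableEq n]
  [Fintype ι] [DecidableEq ι]

lemma X_pow_card_mul_charpoly_fromBlocks_antidiagonal (A : Matrix m n R) (B : Matrix n m R) :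
    X ^ Fintype.card m * (fromBlocks 0 A B 0).charpoly =
      X ^ Fintype.card n * expand R 2 (A * B).charpoly := by
  let A' : Matrix m n R[X] := A.map C
  let B' : Matrix n m R[X] := B.map C
  have charmatrix_eq : (fromBlocks 0 A B 0).charmatrix =
      fromBlocks ((X : R[X]) • 1) (-A') (-B') ((X : R[X]) • 1) := by
    rw [charmatrix_fromBlocks, charmatrix_zero, charmatrix_zero, scalar_apply, scalar_apply,
      smul_one_eq_diagonal, smul_one_eq_diagonal]
  have triangular : (fromBlocks 0 A B 0).charmatrix * fromBlocks ((X : R[X]) • 1) 0 B' 1 =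
      fromBlocks ((X ^ 2 : R[X]) • 1 - A' * B') (-A') 0 ((X : R[X]) • 1) := by
    simp [charmatrix_eq, fromBlocks_multiply, smul_smul, sq, sub_eq_add_neg]
  have expand_charmatrix : (expand R 2).mapMatrix (A * B).charmatrix =
      (X ^ 2 : R[X]) • 1 - A' * B' := by
    ext1 i j
    simp [charmatrix_apply, diagonal_apply, one_apply, apply_ite, A', B', mul_apply]
  calc X ^ Fintype.card m * (fromBlocks 0 A B 0).charpoly
    _ = ((fromBlocks 0 A B 0).charmatrix * fromBlocks ((X : R[X]) • 1) 0 B' 1).det := by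
      rw [det_mul, det_fromBlocks_zero₁₂, det_smul, det_one, det_one, mul_one, mul_one, mul_comm,
        charpoly]
    _ = ((X ^ 2 : R[X]) • 1 - A' * B').det * X ^ Fintype.card n := by
      rw [triangular, det_fromBlocks_zero₂₁, det_smul, det_one, mul_one]
    _ = X ^ Fintype.card n * expand R 2 (A * B).charpoly := by
      rw [← expand_charmatrix, ← AlgHom.map_det, ← charpoly, mul_comm]

lemma charpoly_smul_one (c : R) :
    (c • (1 : Matrix n n R)).charpoly = (X - C c) ^ Fintype.card n := by
  rw [smul_one_eq_diagonal, charpoly_diagonal, Finset.prod_const, Finset.card_univ]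

lemma charpoly_fromBlocks_antidiagonal_of_mul_eq_smul_one {A : Matrix m n R} {B : Matrix n m R}
    {c : R} (hAB : A * B = c • 1) {k : ℕ} (hk : Fintype.card n = Fintype.card m + k) :
    (fromBlocks 0 A B 0).charpoly = X ^ k * (X ^ 2 - C c) ^ Fintype.card m := by
  apply (monic_X_pow (Fintype.card m)).isRegular.left
  simp only [X_pow_card_mul_charpoly_fromBlocks_antidiagonal, hAB, charpoly_smul_one, hk, pow_add,
    map_pow, map_sub, expand_X, expand_C, mul_assoc]

/-- The symbol `U ↦ ∑ Q, ξ Q * U (A, Q)` of the divergence of a 2-tensor in its second index. -/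
def divSymbol (ξ : ι → R) : Matrix ι (ι × ι) R :=
  of fun A P => (1 : Matrix ι ι R) A P.1 * ξ P.2

/-- The symbol `M ↦ ξ A * M B - ξ B * M A` of the curl of a covector field. The curl is stored as a
2-tensor with all its components, so each independent one occurs twice, with opposite signs. -/
def curlSymbol (ξ : ι → R) : Matrix (ι × ι) ι R :=
  of fun P B => ξ P.1 * (1 : Matrix ι ι R) P.2 B - ξ P.2 * (1 : Matrix ι ι R) P.1 B

lemma divSymbol_mul_curlSymbol (ξ : ι → R) :
    divSymbol ξ * curlSymbol ξ = vecMulVec ξ ξ - (ξ ⬝ᵥ ξ) • 1 := by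
  ext A B
  calc (divSymbol ξ * curlSymbol ξ) A B
    _ = ∑ Q, ξ Q * (ξ A * (1 : Matrix ι ι R) Q B - ξ Q * (1 : Matrix ι ι R) A B) := by
      simp [divSymbol, curlSymbol, mul_apply, Fintype.sum_prod_type, one_apply]
    _ = ξ A * ∑ Q, ξ Q * (1 : Matrix ι ι R) Q B - (∑ Q, ξ Q * ξ Q) * (1 : Matrix ι ι R) A B := by
      rw [Finset.mul_sum, Finset.sum_mul, ← Finset.sum_sub_distrib]
      exact Finset.sum_congr rfl fun Q _ => by ring
    _ = (vecMulVec ξ ξ - (ξ ⬝ᵥ ξ) • 1) A B := by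
      simp [vecMulVec_apply, dotProduct, one_apply]

/-- The principal symbol of the constraint-propagation system in any spatial dimension and over any
commutative ring. Its summands `ι`, `ι × ι`, `Unit`, `ι` index `M`, `U`, `H`, `N`; the off-diagonal
blocks are `(U, H, N) ↦ -div U + grad H` and `M ↦ (curl M, div M, 0)`. -/
def constraintPropagationSymbol (ξ : ι → R) :
    Matrix (ι ⊕ (ι × ι) ⊕ Unit ⊕ ι) (ι ⊕ (ι × ι) ⊕ Unit ⊕ ι) R :=
  fromBlocks 0 (fromCols (-divSymbol ξ) (fromCols (replicateCol Unit ξ) 0))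
    (fromRows (curlSymbol ξ) (fromRows (replicateRow Unit ξ) 0)) 0

theorem constraintSymbol_charpoly_general (ξ : ι → R) :
    (constraintPropagationSymbol ξ).charpoly =
      X ^ (Fintype.card ι ^ 2 + 1) * (X ^ 2 - C (ξ ⬝ᵥ ξ)) ^ Fintype.card ι := by
  apply charpoly_fromBlocks_antidiagonal_of_mul_eq_smul_one
  · rw [fromCols_mul_fromRows, fromCols_mul_fromRows, Matrix.neg_mul, divSymbol_mul_curlSymbol,
      ← vecMulVec_eq, Matrix.zero_mul, add_zero, neg_sub, sub_add_cancel]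
  · simp only [Fintype.card_sum, Fintype.card_prod, Fintype.card_unit]
    ring

/-- The position of each of the nine coordinates of `constraintSymbol` among the index summands of
`constraintPropagationSymbol` in dimension two. -/
noncomputable def coordinateEquiv : Fin 9 ≃ Fin 2 ⊕ (Fin 2 × Fin 2) ⊕ Unit ⊕ Fin 2 :=
  .ofBijective
    ![.inl 0, .inl 1,
      .inr (.inl (0, 0)), .inr (.inl (0, 1)), .inr (.inl (1, 0)), .inr (.inl (1, 1)),
      .inr (.inr (.inl ())),
      .inr (.inr (.inr 0)), .inr (.inr (.inr 1))]
    (by decide)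

lemma constraintSymbol_eq_reindex (ξ : Fin 2 → ℝ) :
    constraintSymbol (ξ 0) (ξ 1) =
      reindex coordinateEquiv.symm coordinateEquiv.symm (constraintPropagationSymbol ξ) := by
  ext i j
  fin_cases i <;> fin_cases j <;>
    simp [constraintSymbol, coordinateEquiv, constraintPropagationSymbol, divSymbol, curlSymbol]

lemma charpoly_constraintSymbol (ξ : Fin 2 → ℝ) :
    (constraintSymbol (ξ 0) (ξ 1)).charpoly = X ^ 5 * (X ^ 2 - C (ξ 0 ^ 2 + ξ 1 ^ 2)) ^ 2 := by
  rw [constraintSymbol_eq_reindex, charpoly_reindex, constraintSymbol_charpoly_general,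
    Fintype.card_fin, dotProduct, Fin.sum_univ_two, ← sq, ← sq,
    show 2 ^ 2 + 1 = 5 from rfl]

lemma det_smul_one_sub_constraintSymbol (ξ₁ ξ₂ l : ℝ) :
    (l • (1 : Matrix (Fin 9) (Fin 9) ℝ) - constraintSymbol ξ₁ ξ₂).det =
      l ^ 5 * (l ^ 2 - (ξ₁ ^ 2 + ξ₂ ^ 2)) ^ 2 := by
  rw [smul_one_eq_diagonal, ← scalar_apply, ← eval_charpoly]
  simpa using congrArg (eval l) (charpoly_constraintSymbol ![ξ₁, ξ₂])

end

/-- The characteristic polynomial of `𝒜(ξ)` factors as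
`det(λI₉ − 𝒜(ξ)) = λ⁵ (λ − |ξ|)² (λ + |ξ|)² = λ⁵ (λ² − |ξ|²)²`. -/
theorem constraintSymbol_charpoly (ξ₁ ξ₂ : ℝ) (l : ℝ) :
    (l • (1 : Matrix (Fin 9) (Fin 9) ℝ) - constraintSymbol ξ₁ ξ₂).det
        = l ^ 5 * (l - Real.sqrt (ξ₁ ^ 2 + ξ₂ ^ 2)) ^ 2
            * (l + Real.sqrt (ξ₁ ^ 2 + ξ₂ ^ 2)) ^ 2 ∧
    (l • (1 : Matrix (Fin 9) (Fin 9) ℝ) - constraintSymbol ξ₁ ξ₂).det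
        = l ^ 5 * (l ^ 2 - (ξ₁ ^ 2 + ξ₂ ^ 2)) ^ 2 := by
  have sq_norm : Real.sqrt (ξ₁ ^ 2 + ξ₂ ^ 2) ^ 2 = ξ₁ ^ 2 + ξ₂ ^ 2 := Real.sq_sqrt (by positivity)
  rw [det_smul_one_sub_constraintSymbol]
  exact ⟨by rw [mul_assoc, ← mul_pow, mul_comm (l - _), ← sq_sub_sq, sq_norm], rfl⟩
end

section
/- For every ξ = (ξ₁, ξ₂) ∈ ℝ², the matrix 𝒜(ξ) satisfies the cubic identity 𝒜(ξ)³ = |ξ|² 𝒜(ξ). Consequently, for every ξ ≠ 0 the minimal polynomial of 𝒜(ξ) divides λ(λ − |ξ|)(λ + |ξ|), which has distinct roots, so 𝒜(ξ) is diagonalizable over ℝ. -/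
open Polynomial

/-!
For the splitting of `ℝ⁹` into `M` and `(U, H, N)` the symbol `𝒜(ξ)` is block off-diagonal, and the
composite `M → (U, H, N) → M` of its two blocks is multiplication by `|ξ|²`. This gives the cubic
identity, so `λ(λ - |ξ|)(λ + |ξ|)` annihilates `𝒜(ξ)`. Its linear factors are pairwise coprime when
`ξ ≠ 0`, hence `ℝ⁹` is the sum of the eigenspaces of `𝒜(ξ)`.
-/

section Eigenspace

variable {K V : Type*} [Field K] [AddCommGroup V] [Module K V] {f : Module.End K V}

theorem ker_aeval_prod_X_sub_C_eq_iSup_eigenspace (f : Module.End K V) (s : Finset K) :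
    LinearMap.ker (aeval f (∏ μ ∈ s, (X - C μ))) = ⨆ μ ∈ s, f.eigenspace μ := by
  classical
  induction s using Finset.induction_on with
  | empty => simp [Module.End.one_eq_id]
  | insert μ s hμ ih =>
    have hcoprime : IsCoprime (X - C μ) (∏ ν ∈ s, (X - C ν)) :=
      IsCoprime.prod_right fun ν hν =>
        isCoprime_X_sub_C_of_isUnit_sub (sub_ne_zero.mpr (ne_of_mem_of_not_mem hν hμ).symm).isUnit
    rw [Finset.prod_insert hμ, ← sup_ker_aeval_eq_ker_aeval_mul_of_coprime f hcoprime, ih,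
      Finset.iSup_insert, Module.End.eigenspace_def, aeval_sub, aeval_X, aeval_C,
      Algebra.algebraMap_eq_smul_one]

theorem iSup_eigenspace_eq_top_of_aeval_eq_zero {p : K[X]} (hsplits : p.Splits)
    (hsep : p.Separable) (hp : aeval f p = 0) : ⨆ μ, f.eigenspace μ = ⊤ := by
  classical
  have hroots : aeval f (∏ μ ∈ p.roots.toFinset, (X - C μ)) = 0 := by
    have hlead : p.leadingCoeff ≠ 0 := leadingCoeff_ne_zero.mpr hsep.ne_zero
    rw [hsplits.eq_prod_roots, map_mul, aeval_C, ← Algebra.smul_def] at hp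
    rw [Finset.prod_eq_multiset_prod, Multiset.toFinset_val, (nodup_roots hsep).dedup]
    exact (smul_eq_zero.mp hp).resolve_left hlead
  refine top_le_iff.mp ?_
  calc
    ⊤ = LinearMap.ker (aeval f (∏ μ ∈ p.roots.toFinset, (X - C μ))) := by
      rw [hroots, LinearMap.ker_zero]
    _ = ⨆ μ ∈ p.roots.toFinset, f.eigenspace μ := ker_aeval_prod_X_sub_C_eq_iSup_eigenspace f _
    _ ≤ ⨆ μ, f.eigenspace μ := iSup₂_le fun μ _ => le_iSup f.eigenspace μ

theorem exists_basis_apply_eq_smul_of_iSup_eigenspace_eq_top {ι : Type*}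
    (b : Module.Basis ι K V) (hf : ⨆ μ, f.eigenspace μ = ⊤) :
    ∃ (v : Module.Basis ι K V) (μ : ι → K), ∀ i, f (v i) = μ i • v i := by
  have hspan : ⊤ ≤ Submodule.span K (⋃ μ, (f.eigenspace μ : Set V)) := by
    rw [← hf, Submodule.iSup_eq_span]
  let v₀ := Module.Basis.ofSpan hspan
  have hv₀ (i) : ∃ μ : K, f (v₀ i) = μ • v₀ i := by
    obtain ⟨μ, hμ⟩ := Set.mem_iUnion.mp (Module.Basis.ofSpan_subset hspan ⟨i, rfl⟩)
    exact ⟨μ, Module.End.mem_eigenspace_iff.mp hμ⟩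
  choose μ hμ using hv₀
  let e := v₀.indexEquiv b
  exact ⟨v₀.reindex e, μ ∘ e.symm, fun i => by simpa using hμ (e.symm i)⟩

end Eigenspace

section Diagonalizable

open Matrix

variable {n K : Type*} [Fintype n] [DecidableEq n] [Field K] {A : Matrix n n K}

/-- Diagonalizability of a square matrix over its field of entries, as similarity to a diagonal
matrix. The unit condition on `P` makes `P⁻¹` a genuine inverse rather than a junk value. -/
def IsDiagonalizable (A : Matrix n n K) : Prop :=
  ∃ P D : Matrix n n K, IsUnit P ∧ D.IsDiag ∧ A = P * D * P⁻¹

theorem isDiagonalizable_of_iSup_eigenspace_eq_top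
    (hA : ⨆ μ, Module.End.eigenspace (toLin' A) μ = ⊤) : IsDiagonalizable A := by
  obtain ⟨v, μ, hv⟩ := exists_basis_apply_eq_smul_of_iSup_eigenspace_eq_top (Pi.basisFun K n) hA
  let P : Matrix n n K := (Matrix.of v)ᵀ
  have hP : IsUnit P := linearIndependent_cols_iff_isUnit.mp v.linearIndependent
  have hAP : A * P = P * diagonal μ := by
    ext i j
    rw [mul_diagonal, mul_comm]
    exact congrFun (hv j) i
  refine ⟨P, diagonal μ, hP, isDiag_diagonal μ, ?_⟩
  rw [← hAP, mul_nonsing_inv_cancel_right _ _ ((isUnit_iff_isUnit_det P).mp hP)]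

theorem isDiagonalizable_of_aeval_eq_zero {p : K[X]} (hsplits : p.Splits)
    (hsep : p.Separable) (hp : aeval A p = 0) : IsDiagonalizable A := by
  refine isDiagonalizable_of_iSup_eigenspace_eq_top
    (iSup_eigenspace_eq_top_of_aeval_eq_zero hsplits hsep ?_)
  change aeval (toLinAlgEquiv' A) p = 0
  rw [aeval_algHom_apply, hp, map_zero]

end Diagonalizable

theorem aeval_X_mul_X_sub_C_mul_X_add_C {R A : Type*} [CommRing R] [Ring A] [Algebra R A]
    {a : A} {r : R} (ha : a ^ 3 = r ^ 2 • a) :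
    aeval a (X * (X - C r) * (X + C r)) = 0 := by
  have hexpand : X * (X - C r) * (X + C r) = X ^ 3 - r ^ 2 • X := by
    rw [smul_eq_C_mul, C_pow]
    ring
  rw [hexpand, map_sub, map_smul, map_pow, aeval_X, ha, sub_self]

theorem splits_X_mul_X_sub_C_mul_X_add_C {R : Type*} [CommRing R] (r : R) :
    (X * (X - C r) * (X + C r)).Splits :=
  (Splits.X.mul (Splits.X_sub_C r)).mul (Splits.X_add_C r)

theorem separable_X_mul_X_sub_C_mul_X_add_C {K : Type*} [Field K] [NeZero (2 : K)] {r : K}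
    (hr : r ≠ 0) : (X * (X - C r) * (X + C r)).Separable := by
  have hzero_pos : IsCoprime X (X - C r) := by
    simpa using isCoprime_X_sub_C_of_isUnit_sub (a := 0) (b := r) (by simpa using hr)
  have hzero_neg : IsCoprime X (X + C r) := by
    simpa using isCoprime_X_sub_C_of_isUnit_sub (a := 0) (b := -r) (by simpa using hr)
  have hpos_neg : IsCoprime (X - C r) (X + C r) := by
    simpa using isCoprime_X_sub_C_of_isUnit_sub (a := r) (b := -r)
      (by simpa [← two_mul, two_ne_zero] using hr)
  exact (separable_X.mul separable_X_sub_C hzero_pos).mul (separable_X_add_C r)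
    (hzero_neg.mul_left hpos_neg)

open Matrix in
theorem fromBlocks_zero₁₁_zero₂₂_pow_three {m n R : Type*} [Fintype m] [DecidableEq m] [Fintype n]
    [DecidableEq n] [CommSemiring R] {B : Matrix m n R} {C : Matrix n m R} {c : R}
    (hBC : B * C = c • 1) : fromBlocks 0 B C 0 ^ 3 = c • fromBlocks 0 B C 0 := by
  have hCBC : C * B * C = c • C := by rw [Matrix.mul_assoc, hBC, Matrix.mul_smul, Matrix.mul_one]
  simp [pow_succ, fromBlocks_multiply, fromBlocks_smul, hBC, hCBC]

namespace constraintSymbol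

/-- The block of `𝒜(ξ)` sending `(U₁₁, U₁₂, U₂₁, U₂₂, H, N₁, N₂)` to its `(M₁, M₂)` component;
one of the two nonzero blocks of `𝒜(ξ)` for the splitting `ℝ⁹ = ℝ² ⊕ ℝ⁷`. -/
def toMomentum (ξ₁ ξ₂ : ℝ) : Matrix (Fin 2) (Fin 7) ℝ :=
  !![-ξ₁, -ξ₂, 0, 0, ξ₁, 0, 0;
     0, 0, -ξ₁, -ξ₂, ξ₂, 0, 0]

/-- The block of `𝒜(ξ)` sending `(M₁, M₂)` to its `(U₁₁, U₁₂, U₂₁, U₂₂, H, N₁, N₂)` component,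
which complements `constraintSymbol.toMomentum`. -/
def ofMomentum (ξ₁ ξ₂ : ℝ) : Matrix (Fin 7) (Fin 2) ℝ :=
  !![0, 0; -ξ₂, ξ₁; ξ₂, -ξ₁; 0, 0; ξ₁, ξ₂; 0, 0; 0, 0]

theorem toMomentum_mul_ofMomentum (ξ₁ ξ₂ : ℝ) :
    toMomentum ξ₁ ξ₂ * ofMomentum ξ₁ ξ₂ = (ξ₁ ^ 2 + ξ₂ ^ 2) • 1 := by
  ext i j
  fin_cases i <;> fin_cases j <;>
    simp [toMomentum, ofMomentum, Matrix.mul_apply, Fin.sum_univ_succ] <;> ring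

theorem eq_reindex_fromBlocks (ξ₁ ξ₂ : ℝ) :
    constraintSymbol ξ₁ ξ₂ = Matrix.reindexAlgEquiv ℝ ℝ finSumFinEquiv
      (Matrix.fromBlocks 0 (toMomentum ξ₁ ξ₂) (ofMomentum ξ₁ ξ₂) 0) := by
  ext i j
  fin_cases i <;> fin_cases j <;> rfl

theorem pow_three (ξ₁ ξ₂ : ℝ) :
    constraintSymbol ξ₁ ξ₂ ^ 3 = (ξ₁ ^ 2 + ξ₂ ^ 2) • constraintSymbol ξ₁ ξ₂ := by
  rw [eq_reindex_fromBlocks, ← map_pow, ← map_smul,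
    fromBlocks_zero₁₁_zero₂₂_pow_three (toMomentum_mul_ofMomentum ξ₁ ξ₂)]

end constraintSymbol

/-- `𝒜(ξ)³ = |ξ|² 𝒜(ξ)`; consequently, for `ξ ≠ 0` the minimal
polynomial of `𝒜(ξ)` divides `λ(λ − |ξ|)(λ + |ξ|)`, which has distinct roots,
so `𝒜(ξ)` is diagonalizable over `ℝ`. -/
theorem constraintSymbol_cubic_identity_and_diagonalizable (ξ₁ ξ₂ : ℝ) :
    (constraintSymbol ξ₁ ξ₂) ^ 3 = (ξ₁ ^ 2 + ξ₂ ^ 2) • constraintSymbol ξ₁ ξ₂ ∧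
    ((ξ₁, ξ₂) ≠ (0, 0) →
      (minpoly ℝ (constraintSymbol ξ₁ ξ₂) ∣
          X * (X - C (Real.sqrt (ξ₁ ^ 2 + ξ₂ ^ 2)))
            * (X + C (Real.sqrt (ξ₁ ^ 2 + ξ₂ ^ 2)))) ∧
      (∃ P D : Matrix (Fin 9) (Fin 9) ℝ, IsUnit P ∧ D.IsDiag ∧
          constraintSymbol ξ₁ ξ₂ = P * D * P⁻¹)) := by
  refine ⟨constraintSymbol.pow_three ξ₁ ξ₂, fun hξ => ?_⟩
  have hnorm : 0 < ξ₁ ^ 2 + ξ₂ ^ 2 := by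
    have hne : ξ₁ ≠ 0 ∨ ξ₂ ≠ 0 := by simpa [imp_iff_not_or] using hξ
    rcases hne with h | h <;> positivity
  have hcube : constraintSymbol ξ₁ ξ₂ ^ 3 =
      √(ξ₁ ^ 2 + ξ₂ ^ 2) ^ 2 • constraintSymbol ξ₁ ξ₂ := by
    rw [Real.sq_sqrt hnorm.le, constraintSymbol.pow_three]
  have haeval := aeval_X_mul_X_sub_C_mul_X_add_C hcube
  exact ⟨minpoly.dvd ℝ _ haeval,
    isDiagonalizable_of_aeval_eq_zero (splits_X_mul_X_sub_C_mul_X_add_C _)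
      (separable_X_mul_X_sub_C_mul_X_add_C (Real.sqrt_pos.mpr hnorm).ne') haeval⟩
end

section
/- For every ξ = (ξ₁, ξ₂) ∈ ℝ² with ξ ≠ 0, the matrix 𝒜(ξ) is diagonalizable over ℝ and its spectrum consists exactly of the eigenvalues 0, |ξ| and −|ξ|, with algebraic (and geometric) multiplicities 5, 2 and 2 respectively; in particular the eigenvalues and their multiplicities are independent of the direction of ξ. -/
/-!
`𝒜(ξ)` sends `M` to `(U, H)` and `(U, H)` to `M`, and its square acts on `M` as `|ξ|²`, so
`𝒜³ = |ξ|² 𝒜`. As `X³ - |ξ|² X` splits into distinct linear factors, every vector is a sum of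
eigenvectors for `0` and `±|ξ|`, and the spectral projections are polynomials in `𝒜`. The
multiplicities are the traces of these projections, so they follow from `tr 𝒜 = 0` and
`tr 𝒜² = 4 |ξ|²`.
-/

open Module Module.End

section CommRing

variable {R V : Type*} [CommRing R] [AddCommGroup V] [Module R V] {f : End R V} {ν : R}

theorem hasEigenvalue_of_finrank_eigenspace_pos [Nontrivial R] {μ : R}
    (h : 0 < finrank R (eigenspace f μ)) : f.HasEigenvalue μ :=
  hasEigenvalue_iff.2 fun hbot => h.ne' (by rw [hbot, finrank_bot])

theorem apply_apply_apply_of_pow_three_eq (hf : f ^ 3 = ν ^ 2 • f) (v : V) :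
    f (f (f v)) = ν ^ 2 • f v := by
  simpa only [pow_succ, pow_zero, one_mul, mul_apply, LinearMap.smul_apply]
    using LinearMap.congr_fun hf v

theorem eq_zero_or_eq_or_eq_neg_of_hasEigenvalue [IsDomain R] [IsTorsionFree R V]
    (hf : f ^ 3 = ν ^ 2 • f) {μ : R} (hμ : f.HasEigenvalue μ) :
    μ = 0 ∨ μ = ν ∨ μ = -ν := by
  obtain ⟨v, hv⟩ := hμ.exists_hasEigenvector
  have hcube : μ ^ 3 • v = (ν ^ 2 * μ) • v := by
    rw [← hv.pow_apply, hf, LinearMap.smul_apply, hv.apply_eq_smul, smul_smul]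
  have hroot : μ * (μ ^ 2 - ν ^ 2) = 0 := by
    linear_combination smul_left_injective R hv.2 hcube
  exact (mul_eq_zero.1 hroot).imp_right fun h => sq_eq_sq_iff_eq_or_eq_neg.1 (sub_eq_zero.1 h)

end CommRing

section Field

variable {K V : Type*} [Field K] [AddCommGroup V] [Module K V] {f : End K V} {ν : K}

/-- The spectral projection onto the kernel of an endomorphism `f` with `f³ = ν² f`. -/
def kerSpectralProjection (f : End K V) (ν : K) : End K V :=
  1 - (ν ^ 2)⁻¹ • f ^ 2

/-- The spectral projection onto the `ν`-eigenspace of an endomorphism `f` with `f³ = ν² f`: the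
Lagrange polynomial `X (X + ν) / (2 ν²)` evaluated at `f`. The projection onto the `-ν`-eigenspace
is the same definition at `-ν`. -/
def spectralProjection (f : End K V) (ν : K) : End K V :=
  (2 * ν ^ 2)⁻¹ • (f ^ 2 + ν • f)

theorem isProj_kerSpectralProjection (hf : f ^ 3 = ν ^ 2 • f) (hν : ν ≠ 0) :
    LinearMap.IsProj (eigenspace f 0) (kerSpectralProjection f ν) where
  map_mem v := by
    rw [mem_eigenspace_iff]
    simp only [kerSpectralProjection, sq, LinearMap.sub_apply, one_apply, LinearMap.smul_apply,
      mul_apply, map_sub, map_smul]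
    rw [apply_apply_apply_of_pow_three_eq hf, sq, inv_smul_smul₀ (mul_ne_zero hν hν), sub_self,
      zero_smul]
  map_id v hv := by
    rw [mem_eigenspace_iff, zero_smul] at hv
    simp [kerSpectralProjection, sq, hv]

theorem isProj_spectralProjection [NeZero (2 : K)] (hf : f ^ 3 = ν ^ 2 • f) (hν : ν ≠ 0) :
    LinearMap.IsProj (eigenspace f ν) (spectralProjection f ν) where
  map_mem v := by
    rw [mem_eigenspace_iff]
    simp only [spectralProjection, sq, LinearMap.smul_apply, LinearMap.add_apply, mul_apply,
      map_smul, map_add]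
    rw [apply_apply_apply_of_pow_three_eq hf]
    module
  map_id v hv := by
    rw [mem_eigenspace_iff] at hv
    have h2 : (2 : K) ≠ 0 := two_ne_zero
    simp only [spectralProjection, sq, LinearMap.smul_apply, LinearMap.add_apply, mul_apply, hv,
      map_smul]
    match_scalars
    field_simp
    norm_num

theorem kerSpectralProjection_add_spectralProjection_add_spectralProjection_neg
    [NeZero (2 : K)] (f : End K V) (ν : K) :
    kerSpectralProjection f ν + spectralProjection f ν + spectralProjection f (-ν) = 1 := by
  have h2 : (2 : K) ≠ 0 := two_ne_zero
  simp only [kerSpectralProjection, spectralProjection, neg_sq]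
  match_scalars <;> field_simp <;> ring

theorem iSup_eigenspace_eq_top_of_pow_three_eq [NeZero (2 : K)] (hf : f ^ 3 = ν ^ 2 • f)
    (hν : ν ≠ 0) : ⨆ μ, eigenspace f μ = ⊤ := by
  have hf' : f ^ 3 = (-ν) ^ 2 • f := by rw [neg_sq, hf]
  refine (Submodule.eq_top_iff').2 fun v => ?_
  have hv := LinearMap.congr_fun
    (kerSpectralProjection_add_spectralProjection_add_spectralProjection_neg f ν) v
  rw [LinearMap.add_apply, LinearMap.add_apply, one_apply] at hv
  rw [← hv]
  exact add_mem
    (add_mem (Submodule.mem_iSup_of_mem 0 ((isProj_kerSpectralProjection hf hν).map_mem v))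
      (Submodule.mem_iSup_of_mem ν ((isProj_spectralProjection hf hν).map_mem v)))
    (Submodule.mem_iSup_of_mem (-ν)
      ((isProj_spectralProjection hf' (neg_ne_zero.2 hν)).map_mem v))

variable [FiniteDimensional K V]

theorem finrank_eigenspace_zero_of_pow_three_eq (hf : f ^ 3 = ν ^ 2 • f) (hν : ν ≠ 0) :
    (finrank K (eigenspace f 0) : K) =
      finrank K V - (ν ^ 2)⁻¹ * LinearMap.trace K V (f ^ 2) := by
  rw [← (isProj_kerSpectralProjection hf hν).trace, kerSpectralProjection, map_sub, map_smul,
    LinearMap.trace_one, smul_eq_mul]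

theorem finrank_eigenspace_of_pow_three_eq [NeZero (2 : K)] (hf : f ^ 3 = ν ^ 2 • f)
    (hν : ν ≠ 0) :
    (finrank K (eigenspace f ν) : K) =
      (2 * ν ^ 2)⁻¹ * (LinearMap.trace K V (f ^ 2) + ν * LinearMap.trace K V f) := by
  rw [← (isProj_spectralProjection hf hν).trace, spectralProjection, map_smul, map_add, map_smul,
    smul_eq_mul, smul_eq_mul]

end Field

theorem exists_basis_apply_eq_smul_of_iSup_eigenspace_eq_top_s12 {K V ι : Type*} [Field K]
    [AddCommGroup V] [Module K V] [FiniteDimensional K V] [Fintype ι]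
    (hι : finrank K V = Fintype.card ι) {f : End K V} (hf : ⨆ μ, eigenspace f μ = ⊤) :
    ∃ (b : Basis ι K V) (d : ι → K), ∀ i, f (b i) = d i • b i := by
  rw [Submodule.iSup_eq_span] at hf
  let b := Basis.ofSpan hf.ge
  let e := Fintype.equivOfCardEq ((finrank_eq_card_basis b).symm.trans hι)
  have heigen (j) : ∃ μ, b j ∈ eigenspace f μ :=
    Set.mem_iUnion.1 (Basis.ofSpan_subset hf.ge (Set.mem_range_self j))
  choose d hd using heigen
  exact ⟨b.reindex e, d ∘ e.symm, fun i => by simpa using mem_eigenspace_iff.1 (hd (e.symm i))⟩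

theorem exists_eq_conj_isDiag_of_iSup_eigenspace_eq_top {K n : Type*} [Field K] [Fintype n]
    [DecidableEq n] {A : Matrix n n K} (hA : ⨆ μ, eigenspace A.mulVecLin μ = ⊤) :
    ∃ P D : Matrix n n K, IsUnit P ∧ D.IsDiag ∧ A = P * D * P⁻¹ := by
  obtain ⟨b, d, hb⟩ :=
    exists_basis_apply_eq_smul_of_iSup_eigenspace_eq_top_s12 (finrank_fintype_fun_eq_card K) hA
  let P := (Pi.basisFun K n).toMatrix b
  have : Invertible P := (Pi.basisFun K n).invertibleToMatrix b
  have hAP : A * P = P * Matrix.diagonal d := by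
    ext i j
    rw [Matrix.mul_diagonal, mul_comm]
    simpa [P, Matrix.mul_apply, Matrix.mulVec, dotProduct, Basis.toMatrix_apply]
      using congrFun (hb j) i
  refine ⟨P, Matrix.diagonal d, isUnit_of_invertible P, Matrix.isDiag_diagonal d, ?_⟩
  rw [← hAP, Matrix.mul_inv_cancel_right_of_invertible]

section constraintSymbol

variable (ξ₁ ξ₂ : ℝ)

theorem constraintSymbol_mulVec (v : Fin 9 → ℝ) :
    (constraintSymbol ξ₁ ξ₂).mulVec v =
      ![-(ξ₁ * v 2 + ξ₂ * v 3) + ξ₁ * v 6, -(ξ₁ * v 4 + ξ₂ * v 5) + ξ₂ * v 6,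
        0, ξ₁ * v 1 - ξ₂ * v 0, ξ₂ * v 0 - ξ₁ * v 1, 0, ξ₁ * v 0 + ξ₂ * v 1, 0, 0] := by
  ext i
  fin_cases i <;>
    simp [constraintSymbol, Matrix.mulVec, dotProduct, Fin.sum_univ_succ] <;> ring

theorem trace_constraintSymbol_mulVecLin :
    LinearMap.trace ℝ _ (constraintSymbol ξ₁ ξ₂).mulVecLin = 0 := by
  rw [← Matrix.toLin'_apply', Matrix.trace_toLin'_eq]
  simp [constraintSymbol, Matrix.trace, Fin.sum_univ_succ]

theorem trace_constraintSymbol_mulVecLin_sq :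
    LinearMap.trace ℝ _ ((constraintSymbol ξ₁ ξ₂).mulVecLin ^ 2) = 4 * (ξ₁ ^ 2 + ξ₂ ^ 2) := by
  rw [← Matrix.toLin'_apply', ← Matrix.toLin'_pow, Matrix.trace_toLin'_eq]
  simp [constraintSymbol, Matrix.trace, sq, Fin.sum_univ_succ]
  ring

variable {ξ₁ ξ₂} {ν : ℝ}

theorem constraintSymbol_mulVecLin_pow_three (hν : ν ^ 2 = ξ₁ ^ 2 + ξ₂ ^ 2) :
    (constraintSymbol ξ₁ ξ₂).mulVecLin ^ 3 = ν ^ 2 • (constraintSymbol ξ₁ ξ₂).mulVecLin := by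
  refine LinearMap.ext fun v => ?_
  simp only [pow_succ, pow_zero, one_mul, mul_apply, LinearMap.smul_apply,
    Matrix.mulVecLin_apply, constraintSymbol_mulVec]
  rw [← sq, hν]
  ext i
  fin_cases i <;> simp <;> ring

theorem finrank_eigenspace_constraintSymbol_zero (hν : ν ^ 2 = ξ₁ ^ 2 + ξ₂ ^ 2) (hν0 : ν ≠ 0) :
    finrank ℝ (eigenspace (constraintSymbol ξ₁ ξ₂).mulVecLin 0) = 5 := by
  have h : (finrank ℝ (eigenspace (constraintSymbol ξ₁ ξ₂).mulVecLin 0) : ℝ) = 5 := by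
    rw [finrank_eigenspace_zero_of_pow_three_eq (constraintSymbol_mulVecLin_pow_three hν) hν0,
      trace_constraintSymbol_mulVecLin_sq, finrank_fin_fun, ← hν]
    field_simp
    norm_num
  exact_mod_cast h

theorem finrank_eigenspace_constraintSymbol (hν : ν ^ 2 = ξ₁ ^ 2 + ξ₂ ^ 2) (hν0 : ν ≠ 0) :
    finrank ℝ (eigenspace (constraintSymbol ξ₁ ξ₂).mulVecLin ν) = 2 := by
  have h : (finrank ℝ (eigenspace (constraintSymbol ξ₁ ξ₂).mulVecLin ν) : ℝ) = 2 := by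
    rw [finrank_eigenspace_of_pow_three_eq (constraintSymbol_mulVecLin_pow_three hν) hν0,
      trace_constraintSymbol_mulVecLin_sq, trace_constraintSymbol_mulVecLin, ← hν]
    field_simp
    ring
  exact_mod_cast h

end constraintSymbol

/-- For `ξ ≠ 0`, the matrix `𝒜(ξ)` is diagonalizable over `ℝ`
with spectrum exactly `{0, |ξ|, −|ξ|}` and multiplicities `5, 2, 2`
(the eigenvalues and multiplicities are independent of the direction of `ξ`). -/
theorem constraintSymbol_spectrum (ξ₁ ξ₂ : ℝ) (hξ : (ξ₁, ξ₂) ≠ (0, 0))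
    (ν : ℝ) (hν : ν = Real.sqrt (ξ₁ ^ 2 + ξ₂ ^ 2)) :
    (∀ μ : ℝ, Module.End.HasEigenvalue (constraintSymbol ξ₁ ξ₂).mulVecLin μ ↔
        (μ = 0 ∨ μ = ν ∨ μ = -ν)) ∧
    Module.finrank ℝ
      (Module.End.eigenspace (constraintSymbol ξ₁ ξ₂).mulVecLin 0) = 5 ∧
    Module.finrank ℝ
      (Module.End.eigenspace (constraintSymbol ξ₁ ξ₂).mulVecLin ν) = 2 ∧
    Module.finrank ℝ
      (Module.End.eigenspace (constraintSymbol ξ₁ ξ₂).mulVecLin (-ν)) = 2 ∧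
    (∃ P D : Matrix (Fin 9) (Fin 9) ℝ, IsUnit P ∧ D.IsDiag ∧
        constraintSymbol ξ₁ ξ₂ = P * D * P⁻¹) := by
  have hsq : ν ^ 2 = ξ₁ ^ 2 + ξ₂ ^ 2 := by rw [hν, Real.sq_sqrt (by positivity)]
  have hν0 : ν ≠ 0 := by
    rintro rfl
    have hsum : ξ₁ * ξ₁ + ξ₂ * ξ₂ = 0 := by linear_combination -hsq
    exact hξ (Prod.ext_iff.2 (mul_self_add_mul_self_eq_zero.1 hsum))
  have hcube := constraintSymbol_mulVecLin_pow_three hsq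
  have h_zero := finrank_eigenspace_constraintSymbol_zero hsq hν0
  have h_pos := finrank_eigenspace_constraintSymbol hsq hν0
  have h_neg := finrank_eigenspace_constraintSymbol ((neg_sq ν).trans hsq) (neg_ne_zero.2 hν0)
  refine ⟨fun μ => ⟨eq_zero_or_eq_or_eq_neg_of_hasEigenvalue hcube, ?_⟩, h_zero, h_pos, h_neg,
    exists_eq_conj_isDiag_of_iSup_eigenspace_eq_top
      (iSup_eigenspace_eq_top_of_pow_three_eq hcube hν0)⟩
  rintro (rfl | rfl | rfl) <;> apply hasEigenvalue_of_finrank_eigenspace_pos <;> omega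
end
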